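/- Fourth-order two-body error term (paper eq. A17c): for i ≠ j and any phase-space point (x,p) with r_ij ≠ 0, the left-nested canonical Poisson bracket satisfies {{{{T, V_ij}, T}, V_ij}, T}(x,p) = 4 (G² (m i)(m j)((m i)+(m j)) / r_ij⁸) · ( 6 (v_ij · x_ij)² − r_ij² ‖v_ij‖² ). -/

import Mathlib

open scoped RealInnerProductSpace BigOperators

noncomputable section

/-- Three-dimensional Euclidean space. -/
abbrev E3 : Type := EuclideanSpace ℝ (Fin 3)

/-- Phase space for `N` particles: positions and momenta. -/
abbrev Phase (N : ℕ) : Type := (Fin N → E3) × (Fin N → E3)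

/-- Gradient of a phase-space function with respect to the `k`-th position. -/
def gradPos {N : ℕ} (A : Phase N → ℝ) (k : Fin N) (w : Phase N) : E3 :=
  gradient (fun y => A (Function.update w.1 k y, w.2)) (w.1 k)

/-- Gradient of a phase-space function with respect to the `k`-th momentum. -/
def gradMom {N : ℕ} (A : Phase N → ℝ) (k : Fin N) (w : Phase N) : E3 :=
  gradient (fun y => A (w.1, Function.update w.2 k y)) (w.2 k)

/-- Canonical Poisson bracket of two phase-space functions. -/
def poisson {N : ℕ} (A B : Phase N → ℝ) (w : Phase N) : ℝ :=
  ∑ k, (⟪gradPos A k w, gradMom B k w⟫ - ⟪gradMom A k w, gradPos B k w⟫)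

/-- Kinetic energy `T = Σ_i ‖p_i‖²/(2 m_i)`. -/
def kinetic {N : ℕ} (m : Fin N → ℝ) (w : Phase N) : ℝ :=
  ∑ i, ‖w.2 i‖ ^ 2 / (2 * m i)

/-- Pair potential `V_ij = −G m_i m_j / ‖x_i − x_j‖`. -/
def pairPot {N : ℕ} (G : ℝ) (m : Fin N → ℝ) (i j : Fin N) (w : Phase N) : ℝ :=
  -(G * m i * m j) / ‖w.1 i - w.1 j‖

/-!
Everything happens in the relative coordinates `x = x_ij`, `v = v_ij`. On a function `F(x, v)`,
`{·, T}` acts as the derivative of `F` in the position along `v`, while `{·, V}` acts as `-1/μ`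
times its derivative in the velocity along `∇V(x)`, where `1/μ = 1/m_i + 1/m_j`. Starting from
`{T, V} = -DV(x) v`, symmetry of the second derivative of `V` yields successively

* `{{T, V}, T} = -D²V(x)(v, v)`,
* `{{{T, V}, T}, V} = (2/μ) D²V(x)(v, ∇V) = (1/μ) D(‖∇V‖²)(x) v`,
* `{{{{T, V}, T}, V}, T} = (1/μ) D²(‖∇V‖²)(x)(v, v)`

for any pair potential, and for the Newtonian one `‖∇V‖²` is a multiple of `‖x‖⁻⁴`.
-/

open Filter Topology
open InnerProductSpace (toDual toDual_symm_apply)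

section NormPowers

variable {E : Type*} [NormedAddCommGroup E] [InnerProductSpace ℝ E] {x : E}

lemma hasFDerivAt_norm_zpow (n : ℤ) (hx : x ≠ 0) :
    HasFDerivAt (fun y : E => ‖y‖ ^ n) ((n * ‖x‖ ^ (n - 2)) • innerSL ℝ x) x := by
  have hx' : ‖x‖ ≠ 0 := norm_ne_zero_iff.mpr hx
  have hnorm : HasFDerivAt (fun y : E => ‖y‖) (‖x‖⁻¹ • innerSL ℝ x) x := by
    have h := (hasStrictFDerivAt_norm_sq x).hasFDerivAt.sqrt (pow_ne_zero 2 hx')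
    simp only [Real.sqrt_sq (norm_nonneg _)] at h
    refine h.congr_fderiv ?_
    rw [← Nat.cast_smul_eq_nsmul ℝ, smul_smul]
    congr 1
    field_simp
    simp
  refine ((hasDerivAt_zpow n ‖x‖ (.inl hx')).comp_hasFDerivAt x hnorm).congr_fderiv ?_
  rw [smul_smul, mul_assoc, ← zpow_sub_one₀ hx', sub_sub, one_add_one_eq_two]

lemma contDiffAt_norm_zpow (n : ℤ) {k : WithTop ℕ∞} (hx : x ≠ 0) :
    ContDiffAt ℝ k (fun y : E => ‖y‖ ^ n) x := by
  obtain ⟨l, rfl | rfl⟩ := n.eq_nat_or_neg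
  · simpa only [zpow_natCast] using (contDiffAt_norm ℝ hx).pow l
  · simpa only [zpow_neg, zpow_natCast] using
      ((contDiffAt_norm ℝ hx).pow l).fun_inv (pow_ne_zero l (norm_ne_zero_iff.mpr hx))

lemma fderiv_fderiv_const_mul_norm_zpow (c : ℝ) (n : ℤ) (hx : x ≠ 0) (v : E) :
    fderiv ℝ (fderiv ℝ fun y : E => c * ‖y‖ ^ n) x v v =
      c * n * (‖x‖ ^ (n - 2) * ‖v‖ ^ 2 + (n - 2) * ‖x‖ ^ (n - 4) * ⟪v, x⟫ ^ 2) := by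
  have hfderiv : fderiv ℝ (fun y : E => c * ‖y‖ ^ n) =ᶠ[𝓝 x]
      fun y => (c * n * ‖y‖ ^ (n - 2)) • innerSL ℝ y := by
    filter_upwards [eventually_ne_nhds hx] with y hy
    rw [((hasFDerivAt_norm_zpow n hy).const_mul c).fderiv, smul_smul, mul_assoc]
  have hcoeff := (hasFDerivAt_norm_zpow (n - 2) hx).const_mul (c * n)
  have hinner : HasFDerivAt (fun y : E => innerSL ℝ y) (innerSL ℝ) x :=
    ContinuousLinearMap.hasFDerivAt (𝕜 := ℝ) (innerSL ℝ)
  have hself : (innerSL ℝ : E →L[ℝ] E →L[ℝ] ℝ) v v = ‖v‖ ^ 2 := real_inner_self_eq_norm_sq v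
  rw [hfderiv.fderiv_eq, (hcoeff.fun_smul hinner).fderiv]
  simp only [Int.cast_sub, Int.cast_ofNat, sub_sub, Int.reduceAdd, add_apply, smul_apply,
    ContinuousLinearMap.smulRight_apply, coe_innerSL_apply, real_inner_comm v x, smul_eq_mul, hself]
  ring_nf

end NormPowers

section Gradient

variable {E : Type*} [NormedAddCommGroup E] [InnerProductSpace ℝ E] [CompleteSpace E] {x : E}

lemma hasGradientAt_comp_add_smul_sub {h : E → ℝ} {g u : E} (hg : HasGradientAt h g u)
    (c : ℝ) (a : E) : HasGradientAt (fun y => h (u + c • (y - a))) (c • g) a := by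
  have haffine : HasFDerivAt (fun y : E => u + c • (y - a)) (c • ContinuousLinearMap.id ℝ E) a :=
    (((hasFDerivAt_id a).sub_const a).const_smul c).const_add u
  have hh : HasFDerivAt h (toDual ℝ E g) (u + c • (a - a)) := by simpa using hg.hasFDerivAt
  refine hasGradientAt_iff_hasFDerivAt.mpr ((hh.comp a haffine).congr_fderiv ?_)
  ext y
  simp

lemma contDiffAt_gradient {U : E → ℝ} {n : WithTop ℕ∞} (hU : ContDiffAt ℝ (n + 1) U x) :
    ContDiffAt ℝ n (gradient U) x :=
  (LinearIsometryEquiv.contDiff (𝕜 := ℝ) (toDual ℝ E).symm).contDiffAt.comp x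
    (hU.fderiv_right le_rfl)

lemma fderiv_norm_sq_gradient {U : E → ℝ} (hU : DifferentiableAt ℝ (fderiv ℝ U) x) (v : E) :
    fderiv ℝ (fun y => ‖gradient U y‖ ^ 2) x v =
      2 * fderiv ℝ (fderiv ℝ U) x v (gradient U x) := by
  have hgrad : HasFDerivAt (gradient U) _ x :=
    (LinearIsometryEquiv.hasFDerivAt (𝕜 := ℝ) (toDual ℝ E).symm).comp x hU.hasFDerivAt
  have hdual : ⟪gradient U x, (toDual ℝ E).symm (fderiv ℝ (fderiv ℝ U) x v)⟫ =
      fderiv ℝ (fderiv ℝ U) x v (gradient U x) := by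
    rw [real_inner_comm, toDual_symm_apply]
  rw [hgrad.norm_sq.fderiv]
  simpa [-inner_gradient_left] using hdual

lemma norm_sq_gradient_const_mul_norm_zpow (c : ℝ) (n : ℤ) (hx : x ≠ 0) :
    ‖gradient (fun y : E => c * ‖y‖ ^ n) x‖ ^ 2 = (c * n) ^ 2 * ‖x‖ ^ (2 * n - 2) := by
  have hgrad : HasGradientAt (fun y : E => c * ‖y‖ ^ n) ((c * (n * ‖x‖ ^ (n - 2))) • x) x := by
    refine ((hasFDerivAt_norm_zpow n hx).const_mul c).congr_fderiv ?_
    ext v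
    simp [mul_assoc]
  have hx' : ‖x‖ ≠ 0 := norm_ne_zero_iff.mpr hx
  have hpow : ‖x‖ ^ (2 * n - 2) = (‖x‖ ^ (n - 2) * ‖x‖) ^ 2 := by
    rw [← zpow_add_one₀ hx', ← zpow_natCast, ← zpow_mul]
    congr 1
    push_cast
    ring
  rw [hgrad.gradient, norm_smul, hpow, mul_pow, Real.norm_eq_abs, sq_abs]
  ring

lemma fderiv_fderiv_norm_sq_gradient_const_mul_norm_zpow (c : ℝ) (n : ℤ) (hx : x ≠ 0) (v : E) :
    fderiv ℝ (fderiv ℝ fun y => ‖gradient (fun z : E => c * ‖z‖ ^ n) y‖ ^ 2) x v v =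
      (c * n) ^ 2 * ((2 * n - 2) * (‖x‖ ^ (2 * n - 4) * ‖v‖ ^ 2 +
        (2 * n - 4) * ‖x‖ ^ (2 * n - 6) * ⟪v, x⟫ ^ 2)) := by
  have hnorm : (fun y => ‖gradient (fun z : E => c * ‖z‖ ^ n) y‖ ^ 2) =ᶠ[𝓝 x]
      fun y => (c * n) ^ 2 * ‖y‖ ^ (2 * n - 2) := by
    filter_upwards [eventually_ne_nhds hx] with y hy
      using norm_sq_gradient_const_mul_norm_zpow c n hy
  rw [hnorm.fderiv.fderiv_eq, fderiv_fderiv_const_mul_norm_zpow _ _ hx]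
  push_cast
  ring_nf

end Gradient

section TwoBody

variable {N : ℕ}

/-- The relative position `x_ij = x_i - x_j`. -/
def relPos (i j : Fin N) (w : Phase N) : E3 := w.1 i - w.1 j

/-- The relative velocity `v_ij = p_i / m_i - p_j / m_j`. -/
def relVel (m : Fin N → ℝ) (i j : Fin N) (w : Phase N) : E3 :=
  (m i)⁻¹ • w.2 i - (m j)⁻¹ • w.2 j

/-- The coefficient of `x_k` in `x_ij`: for `i ≠ j` it is `1` at `k = i`, `-1` at `k = j` and `0`
otherwise, while for `i = j` it vanishes. -/
def pairSign (i j k : Fin N) : ℝ := (Pi.single i 1 - Pi.single j 1 : Fin N → ℝ) k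

/-- The two-body observable `F(x_ij, v_ij)`. Its brackets with the kinetic energy and with a pair
potential `U(x_ij)` are again of this form. -/
def pairObservable (m : Fin N → ℝ) (i j : Fin N) (F : E3 → E3 → ℝ) (w : Phase N) : ℝ :=
  F (relPos i j w) (relVel m i j w)

variable {m : Fin N → ℝ} {i j : Fin N} {w : Phase N} {F : E3 → E3 → ℝ} {U : E3 → ℝ}

lemma sum_pairSign_mul (i j : Fin N) (f : Fin N → ℝ) :
    ∑ k, pairSign i j k * f k = f i - f j := by
  simp [pairSign, sub_mul, Finset.sum_sub_distrib, Pi.single_apply]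

lemma relPos_update (i j k : Fin N) (w : Phase N) (y : E3) :
    relPos i j (Function.update w.1 k y, w.2) =
      relPos i j w + pairSign i j k • (y - w.1 k) := by
  simp only [relPos, pairSign, Function.update_apply, Pi.sub_apply, Pi.single_apply,
    eq_comm (a := k)]
  split_ifs <;> simp_all

lemma relVel_update (m : Fin N → ℝ) (i j k : Fin N) (w : Phase N) (y : E3) :
    relVel m i j (w.1, Function.update w.2 k y) =
      relVel m i j w + (pairSign i j k * (m k)⁻¹) • (y - w.2 k) := by
  simp only [relVel, pairSign, Function.update_apply, Pi.sub_apply, Pi.single_apply,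
    eq_comm (a := k)]
  split_ifs <;> subst_vars <;> module

lemma gradPos_congr {A B : Phase N → ℝ} (h : A =ᶠ[𝓝 w] B) (k : Fin N) :
    gradPos A k w = gradPos B k w := by
  have hcont : Continuous fun y : E3 => ((Function.update w.1 k y, w.2) : Phase N) := by fun_prop
  exact EventuallyEq.gradient_eq ((hcont.tendsto' (w.1 k) w (by simp)).eventually h)

lemma gradMom_congr {A B : Phase N → ℝ} (h : A =ᶠ[𝓝 w] B) (k : Fin N) :
    gradMom A k w = gradMom B k w := by
  have hcont : Continuous fun y : E3 => ((w.1, Function.update w.2 k y) : Phase N) := by fun_prop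
  exact EventuallyEq.gradient_eq ((hcont.tendsto' (w.2 k) w (by simp)).eventually h)

lemma poisson_congr_left {A B C : Phase N → ℝ} (h : A =ᶠ[𝓝 w] B) :
    poisson A C w = poisson B C w := by
  simp only [poisson, gradPos_congr h, gradMom_congr h]

lemma poisson_antisymm (A B : Phase N → ℝ) (w : Phase N) : poisson A B w = -poisson B A w := by
  rw [poisson, poisson, ← Finset.sum_neg_distrib]
  exact Finset.sum_congr rfl fun k _ => by
    rw [real_inner_comm, real_inner_comm (gradPos B k w), neg_sub]

lemma gradPos_kinetic (m : Fin N → ℝ) (k : Fin N) (w : Phase N) : gradPos (kinetic m) k w = 0 :=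
  (hasGradientAt_const (w.1 k) (kinetic m w)).gradient

lemma gradMom_kinetic {k : Fin N} (hk : m k ≠ 0) (w : Phase N) :
    gradMom (kinetic m) k w = (m k)⁻¹ • w.2 k := by
  have hsplit : (fun y => kinetic m (w.1, Function.update w.2 k y)) = fun y =>
      ‖y‖ ^ 2 * (2 * m k)⁻¹ + ∑ l ∈ Finset.univ \ {k}, ‖w.2 l‖ ^ 2 / (2 * m l) := by
    funext y
    simp only [kinetic, Function.apply_update fun l (p : E3) => ‖p‖ ^ 2 / (2 * m l)]
    exact Finset.sum_update_of_mem (Finset.mem_univ k) _ _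
  rw [gradMom, hsplit]
  refine HasGradientAt.gradient ((((hasStrictFDerivAt_norm_sq (w.2 k)).hasFDerivAt.mul_const
    (2 * m k)⁻¹).add_const _).congr_fderiv ?_)
  ext y
  simp only [mul_inv_rev, smul_apply, coe_innerSL_apply, nsmul_eq_mul, Nat.cast_ofNat,
    smul_eq_mul, map_smul, InnerProductSpace.toDual_apply_apply]
  field_simp

lemma gradPos_pairObservable {g : E3}
    (hF : HasGradientAt (F · (relVel m i j w)) g (relPos i j w)) (k : Fin N) :
    gradPos (pairObservable m i j F) k w = pairSign i j k • g := by
  refine HasGradientAt.gradient ?_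
  simp only [pairObservable, relPos_update]
  exact hasGradientAt_comp_add_smul_sub hF _ _

lemma gradMom_pairObservable {g : E3}
    (hF : HasGradientAt (F (relPos i j w)) g (relVel m i j w)) (k : Fin N) :
    gradMom (pairObservable m i j F) k w = (pairSign i j k * (m k)⁻¹) • g := by
  refine HasGradientAt.gradient ?_
  simp only [pairObservable, relVel_update]
  exact hasGradientAt_comp_add_smul_sub hF _ _

lemma poisson_pairObservable_kinetic (hm : ∀ k, m k ≠ 0) {F' : StrongDual ℝ E3}
    (hF : HasFDerivAt (F · (relVel m i j w)) F' (relPos i j w)) :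
    poisson (pairObservable m i j F) (kinetic m) w = F' (relVel m i j w) := by
  simp only [poisson, gradPos_kinetic, gradMom_kinetic (hm _),
    gradPos_pairObservable hF.hasGradientAt, inner_zero_right, sub_zero, real_inner_smul_left,
    toDual_symm_apply]
  rw [sum_pairSign_mul i j fun k => F' ((m k)⁻¹ • w.2 k), ← map_sub, relVel]

lemma poisson_pairObservable_potential (hij : i ≠ j) {F' : StrongDual ℝ E3}
    (hF : HasFDerivAt (F (relPos i j w)) F' (relVel m i j w))
    (hU : DifferentiableAt ℝ U (relPos i j w)) :
    poisson (pairObservable m i j F) (U ∘ relPos i j) w =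
      -(((m i)⁻¹ + (m j)⁻¹) * F' (gradient U (relPos i j w))) := by
  have hpos (k : Fin N) : gradPos (U ∘ relPos i j) k w =
      pairSign i j k • gradient U (relPos i j w) :=
    gradPos_pairObservable (m := m) (F := fun x _ => U x) hU.hasGradientAt k
  have hmom (k : Fin N) : gradMom (U ∘ relPos i j) k w = 0 :=
    (hasGradientAt_const (w.2 k) (U (relPos i j w))).gradient
  simp only [poisson, hpos, hmom, gradMom_pairObservable hF.hasGradientAt, inner_zero_right,
    zero_sub, real_inner_smul_left, real_inner_smul_right, toDual_symm_apply, mul_assoc]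
  rw [Finset.sum_neg_distrib, sum_pairSign_mul]
  simp only [pairSign, Pi.sub_apply, Pi.single_eq_same, Pi.single_eq_of_ne hij,
    Pi.single_eq_of_ne hij.symm]
  ring

lemma eventually_contDiffAt_relPos {n : ℕ} (hU : ContDiffAt ℝ n U (relPos i j w)) :
    ∀ᶠ w' in 𝓝 w, ContDiffAt ℝ n U (relPos i j w') := by
  have hcont : Continuous (relPos i j) := by unfold relPos; fun_prop
  exact hcont.continuousAt.eventually (hU.eventually (by simp))

lemma poisson_TV (hm : ∀ k, m k ≠ 0) (hU : DifferentiableAt ℝ U (relPos i j w)) :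
    poisson (kinetic m) (U ∘ relPos i j) w =
      pairObservable m i j (fun x v => -fderiv ℝ U x v) w := by
  rw [poisson_antisymm]
  exact congrArg Neg.neg (poisson_pairObservable_kinetic (F := fun x _ => U x) hm
    hU.hasFDerivAt)

lemma poisson_TVT (hm : ∀ k, m k ≠ 0) (hU : ContDiffAt ℝ 2 U (relPos i j w)) :
    poisson (poisson (kinetic m) (U ∘ relPos i j)) (kinetic m) w =
      pairObservable m i j (fun x v => -fderiv ℝ (fderiv ℝ U) x v v) w := by
  have hTV : poisson (kinetic m) (U ∘ relPos i j) =ᶠ[𝓝 w] _ :=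
    (eventually_contDiffAt_relPos hU).mono fun w' h =>
      poisson_TV hm (h.differentiableAt two_ne_zero)
  have hD : DifferentiableAt ℝ (fderiv ℝ U) (relPos i j w) :=
    (hU.fderiv_right (m := 1) le_rfl).differentiableAt one_ne_zero
  rw [poisson_congr_left hTV, poisson_pairObservable_kinetic hm
    (hD.hasFDerivAt.clm_apply (hasFDerivAt_const _ _)).neg]
  simp [pairObservable]

lemma poisson_TVTV (hm : ∀ k, m k ≠ 0) (hij : i ≠ j) (hU : ContDiffAt ℝ 2 U (relPos i j w)) :
    poisson (poisson (poisson (kinetic m) (U ∘ relPos i j)) (kinetic m)) (U ∘ relPos i j) w =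
      pairObservable m i j (fun x v => ((m i)⁻¹ + (m j)⁻¹) *
        fderiv ℝ (fun y => ‖gradient U y‖ ^ 2) x v) w := by
  have hTVT : poisson (poisson (kinetic m) (U ∘ relPos i j)) (kinetic m) =ᶠ[𝓝 w] _ :=
    (eventually_contDiffAt_relPos hU).mono fun w' h => poisson_TVT hm h
  have hsymm : IsSymmSndFDerivAt ℝ U (relPos i j w) := hU.isSymmSndFDerivAt (by simp)
  have hD : DifferentiableAt ℝ (fderiv ℝ U) (relPos i j w) :=
    (hU.fderiv_right (m := 1) le_rfl).differentiableAt one_ne_zero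
  have hquad := ((fderiv ℝ (fderiv ℝ U) (relPos i j w)).hasFDerivAt.clm_apply
    (hasFDerivAt_id (relVel m i j w))).neg
  rw [poisson_congr_left hTVT,
    poisson_pairObservable_potential hij hquad (hU.differentiableAt two_ne_zero)]
  simp only [ContinuousLinearMap.comp_id, id_eq, add_apply, neg_apply,
    ContinuousLinearMap.flip_apply, hsymm.eq (gradient U _), pairObservable,
    fderiv_norm_sq_gradient hD]
  ring

theorem fourth_order_TVTVT_general (hm : ∀ k, m k ≠ 0) (hij : i ≠ j)
    (hU : ContDiffAt ℝ 3 U (relPos i j w)) :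
    poisson (poisson (poisson (poisson (kinetic m) (U ∘ relPos i j))
        (kinetic m)) (U ∘ relPos i j)) (kinetic m) w =
      ((m i)⁻¹ + (m j)⁻¹) * fderiv ℝ (fderiv ℝ fun x => ‖gradient U x‖ ^ 2)
        (relPos i j w) (relVel m i j w) (relVel m i j w) := by
  have hTVTV : poisson (poisson (poisson (kinetic m) (U ∘ relPos i j)) (kinetic m))
      (U ∘ relPos i j) =ᶠ[𝓝 w] _ :=
    (eventually_contDiffAt_relPos hU).mono fun w' h => poisson_TVTV hm hij (h.of_le (by norm_num))
  have hS : ContDiffAt ℝ 2 (fun x => ‖gradient U x‖ ^ 2) (relPos i j w) :=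
    (contDiffAt_gradient hU).norm_sq ℝ
  have hD : DifferentiableAt ℝ (fderiv ℝ fun x => ‖gradient U x‖ ^ 2) (relPos i j w) :=
    (hS.fderiv_right (m := 1) le_rfl).differentiableAt one_ne_zero
  rw [poisson_congr_left hTVTV, poisson_pairObservable_kinetic hm
    ((hD.hasFDerivAt.clm_apply (hasFDerivAt_const _ _)).const_mul _)]
  simp

lemma pairPot_eq_comp_relPos (G : ℝ) (m : Fin N → ℝ) (i j : Fin N) :
    pairPot G m i j = (fun x => -(G * m i * m j) * ‖x‖ ^ (-1 : ℤ)) ∘ relPos i j := by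
  funext w
  simp [pairPot, relPos, div_eq_mul_inv]

end TwoBody


/-- Fourth-order two-body error term (paper eq. A17c):
`{{{{T,V_ij},T},V_ij},T} = 4 (G² m_i m_j (m_i + m_j) / r_ij⁸)
  (6 (v_ij·x_ij)² − r_ij² v_ij²)`. -/
theorem fourth_order_TVTVT {N : ℕ} (G : ℝ) (hG : 0 < G) (m : Fin N → ℝ)
    (hm : ∀ i, 0 < m i) (i j : Fin N) (hij : i ≠ j) (w : Phase N)
    (hr : ‖w.1 i - w.1 j‖ ≠ 0) (xij vij : E3)
    (hx : xij = w.1 i - w.1 j)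
    (hv : vij = (m i)⁻¹ • w.2 i - (m j)⁻¹ • w.2 j) :
    poisson (poisson (poisson (poisson (kinetic m) (pairPot G m i j))
        (kinetic m)) (pairPot G m i j)) (kinetic m) w =
      4 * (G ^ 2 * m i * m j * (m i + m j) / ‖xij‖ ^ 8) *
        (6 * ⟪vij, xij⟫ ^ 2 - ‖xij‖ ^ 2 * ‖vij‖ ^ 2) := by
  subst hx hv
  have hx : relPos i j w ≠ 0 := norm_ne_zero_iff.mp hr
  have hU : ContDiffAt ℝ 3 (fun x : E3 => -(G * m i * m j) * ‖x‖ ^ (-1 : ℤ)) (relPos i j w) :=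
    contDiffAt_const.mul (contDiffAt_norm_zpow (-1) hx)
  rw [pairPot_eq_comp_relPos, fourth_order_TVTVT_general (fun k => (hm k).ne') hij hU,
    fderiv_fderiv_norm_sq_gradient_const_mul_norm_zpow _ _ hx]
  have hi := (hm i).ne'
  have hj := (hm j).ne'
  rw [relPos, relVel]
  push_cast
  field_simp
  ring
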